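/- Let ρ be a metric on ℝⁿ (n ≥ 1) whose induced topology coincides with the Euclidean topology of ℝⁿ, and let A ⊆ ℝⁿ be a nonempty open set (in the Euclidean topology). Then ℋⁿ_ρ(A) > 0. -/

import Mathlib

open MeasureTheory

/-- The `d`-dimensional Hausdorff outer measure on `X` computed with respect to an
explicitly given metric `ρ` on `X` (no normalizing constant). -/
noncomputable def hausdorffOuterMeasure {X : Type*} (ρ : MetricSpace X) (d : ℝ) :
    MeasureTheory.OuterMeasure X :=
  @MeasureTheory.OuterMeasure.mkMetric X (@MetricSpace.toEMetricSpace X ρ) fun r => r ^ d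

/-!
The heart of the matter is Besicovitch's inequality: a continuous image of the unit cube whose
pairs of opposite faces are at distance at least `d i` has Hausdorff measure at least `∏ i, d i`,
because the distances to one face of each pair form a `1`-Lipschitz map onto a set containing the
box `∏ i, [0, d i]`. An embedded cube has disjoint opposite faces, so all `d i` can be taken
positive.

That the map covers the box is the Poincaré–Miranda theorem, proved here in the analytic spirit of
Milnor and Rogers. If `x + G x` is a Lipschitz self-map of the cube preserving every face, then
`x + t • G x` is, for small `t`, a bijection of the cube with positive Jacobian, whose integral is
therefore the volume of the cube. This integral is a polynomial in `t`, so it equals the volume at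
`t = 1` too; but a self-map with values in the boundary has vanishing Jacobian almost everywhere.
-/

open Module Set
open scoped NNReal ENNReal Topology

theorem exists_polynomial_eval_eq_det_one_add_smul {R M : Type*} [CommRing R] [Nontrivial R]
    [AddCommGroup M] [Module R M] [Module.Free R M] [Module.Finite R M] (A : M →ₗ[R] M) :
    ∃ p : Polynomial R, p.natDegree ≤ finrank R M ∧
      ∀ t : R, p.eval t = LinearMap.det (1 + t • A) := by
  set B := LinearMap.toMatrix (finBasis R M) (finBasis R M) A with hB
  refine ⟨((Polynomial.X : Polynomial R) • B.map Polynomial.C +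
    (1 : Matrix _ _ R).map Polynomial.C).det, ?_, fun t => ?_⟩
  · simpa only [Fintype.card_fin] using Polynomial.natDegree_det_X_add_C_le B 1
  · rw [← Polynomial.coe_evalRingHom, RingHom.map_det,
      ← LinearMap.det_toMatrix (finBasis R M), add_comm]
    congr 1
    ext i j
    simp [hB, LinearMap.toMatrix_one, Matrix.one_apply, apply_ite, mul_comm _ t]

theorem exists_weights_det_one_add {K M : Type*} [Field K] [AddCommGroup M] [Module K M]
    [FiniteDimensional K M] {t : Fin (finrank K M + 1) → K} (ht : Function.Injective t) :
    ∃ w : Fin (finrank K M + 1) → K, ∀ A : M →ₗ[K] M,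
      LinearMap.det (1 + A) = ∑ j, w j * LinearMap.det (1 + t j • A) := by
  refine ⟨fun j => (Lagrange.basis Finset.univ t j).eval 1, fun A => ?_⟩
  obtain ⟨p, hdeg, heval⟩ := exists_polynomial_eval_eq_det_one_add_smul A
  have hcard : p.degree < (Finset.univ : Finset (Fin (finrank K M + 1))).card := by
    rw [Finset.card_fin]
    exact Polynomial.degree_le_natDegree.trans_lt (by exact_mod_cast Nat.lt_succ_of_le hdeg)
  calc LinearMap.det (1 + A) = p.eval 1 := by rw [heval, one_smul]
    _ = (Lagrange.interpolate Finset.univ t fun j => p.eval (t j)).eval 1 := by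
      rw [← Lagrange.eq_interpolate ht.injOn hcard]
    _ = ∑ j, (Lagrange.basis Finset.univ t j).eval 1 * LinearMap.det (1 + t j • A) := by
      simp only [Lagrange.interpolate_apply, Polynomial.eval_finsetSum, Polynomial.eval_mul,
        Polynomial.eval_C, heval, mul_comm]

section SmallPerturbation

variable {E : Type*} [NormedAddCommGroup E] [NormedSpace ℝ E]

theorem det_one_add_pos_of_norm_lt_one [FiniteDimensional ℝ E] {A : E →L[ℝ] E} (hA : ‖A‖ < 1) :
    0 < (1 + A).det := by
  have hcont : Continuous fun s : ℝ => (1 + s • A).det :=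
    ContinuousLinearMap.continuous_det.comp (by fun_prop)
  have hne : ∀ s ∈ Icc (0 : ℝ) 1, (1 + s • A).det ≠ 0 := by
    rintro s ⟨hs0, hs1⟩
    have hs : ‖-(s • A)‖ < 1 := by
      rw [norm_neg, norm_smul, Real.norm_of_nonneg hs0]
      exact (mul_le_of_le_one_left (norm_nonneg A) hs1).trans_lt hA
    have hunit : IsUnit (1 + s • A) := by simpa using isUnit_one_sub_of_norm_lt_one hs
    exact ((hunit.map ContinuousLinearMap.toLinearMapRingHom).map LinearMap.det).ne_zero
  by_contra! hle
  obtain ⟨s, hs, hs0⟩ := intermediate_value_Icc' zero_le_one hcont.continuousOn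
    (show (0 : ℝ) ∈ Icc _ _ by simpa [ContinuousLinearMap.det] using hle)
  exact hne s hs hs0

theorem bijective_add_of_lipschitzWith_lt_one [CompleteSpace E] {c : ℝ≥0} {G : E → E}
    (hG : LipschitzWith c G) (hc : c < 1) : Function.Bijective fun x => x + G x := by
  have happrox : ApproximatesLinearOn (fun x => x + G x)
      (ContinuousLinearEquiv.refl ℝ E : E →L[ℝ] E) univ c := by
    refine ApproximatesLinearOn.approximatesLinearOn_iff_lipschitzOnWith.2 ?_
    convert! hG.lipschitzOnWith (s := univ) using 1
    ext x
    simp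
  have hN : Subsingleton E ∨ c < ‖((ContinuousLinearEquiv.refl ℝ E).symm : E →L[ℝ] E)‖₊⁻¹ :=
    (subsingleton_or_nontrivial E).imp_right fun (_ : Nontrivial E) => by simpa using hc
  exact ⟨injOn_univ.1 (happrox.injOn hN), happrox.surjective hN⟩

end SmallPerturbation

section Jacobian

variable {E : Type*} [NormedAddCommGroup E] [NormedSpace ℝ E] [FiniteDimensional ℝ E]
  [MeasurableSpace E] [BorelSpace E] (μ : Measure E) {c : ℝ≥0}

theorem integrableOn_comp_fderiv_of_lipschitzWith {F : Type*} [NormedAddCommGroup F]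
    {G : E → E} (hG : LipschitzWith c G)
    {h : (E →L[ℝ] E) → F} (hh : Continuous h) {s : Set E} (hs : μ s ≠ ∞) :
    IntegrableOn (fun x => h (fderiv ℝ G x)) s μ := by
  obtain ⟨C, hC⟩ := (isCompact_closedBall (0 : E →L[ℝ] E) c).exists_bound_of_continuousOn
    hh.continuousOn
  refine Measure.integrableOn_of_bounded hs
    (hh.comp_aestronglyMeasurable (measurable_fderiv ℝ G).aestronglyMeasurable)
    (M := C) (.of_forall fun x => hC _ ?_)
  simpa using norm_fderiv_le_of_lipschitz ℝ hG

variable [μ.IsAddHaarMeasure]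

theorem addHaar_image_eq_zero_of_lipschitzWith {Φ : E → E} (hΦ : LipschitzWith c Φ) {s : Set E}
    (hs : μ s = 0) : μ (Φ '' s) = 0 := by
  have hs' : μH[finrank ℝ E] s = 0 := Measure.absolutelyContinuous_isAddHaarMeasure _ μ hs
  refine Measure.absolutelyContinuous_isAddHaarMeasure μ (μH[finrank ℝ E]) ?_
  have h := hΦ.hausdorffMeasure_image_le (Nat.cast_nonneg (finrank ℝ E)) s
  rw [hs', mul_zero] at h
  exact nonpos_iff_eq_zero.1 h

theorem setIntegral_abs_det_fderiv_eq_measureReal_image {Φ : E → E} (hΦ : LipschitzWith c Φ)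
    {s : Set E} (hs : MeasurableSet s) (hinj : InjOn Φ s) :
    ∫ x in s, |(fderiv ℝ Φ x).det| ∂μ = μ.real (Φ '' s) := by
  set t := s ∩ {x | DifferentiableAt ℝ Φ x}
  have hts : t ⊆ s := inter_subset_left
  have ht : MeasurableSet t := hs.inter (measurableSet_of_differentiableAt ℝ Φ)
  have hnull : μ (s \ t) = 0 :=
    measure_mono_null (fun x hx h => hx.2 ⟨hx.1, h⟩) (ae_iff.1 hΦ.ae_differentiableAt)
  have hst : t =ᵐ[μ] s := ae_eq_set.2 ⟨by simp [sdiff_eq_empty.2 hts], hnull⟩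
  have himage : Φ '' t =ᵐ[μ] Φ '' s := by
    refine ae_eq_set.2 ⟨by simp [sdiff_eq_empty.2 (image_mono hts)], ?_⟩
    rw [← hinj.image_sdiff_subset hts]
    exact addHaar_image_eq_zero_of_lipschitzWith μ hΦ hnull
  calc ∫ x in s, |(fderiv ℝ Φ x).det| ∂μ
      = ∫ x in t, |(fderiv ℝ Φ x).det| • (1 : ℝ) ∂μ := by
        simp only [smul_eq_mul, mul_one, setIntegral_congr_set hst]
    _ = ∫ _ in Φ '' t, (1 : ℝ) ∂μ :=
        (integral_image_eq_integral_abs_det_fderiv_smul μ ht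
          (fun x hx => hx.2.hasFDerivAt.hasFDerivWithinAt) (hinj.mono hts) fun _ => (1 : ℝ)).symm
    _ = μ.real (Φ '' s) := by
        rw [setIntegral_const, smul_eq_mul, mul_one, measureReal_congr himage]

theorem setIntegral_det_one_add_fderiv_eq_measureReal_of_lt_one {G : E → E} (hG : LipschitzWith c G)
    (hc : c < 1) {Q : Set E} (hQ : MeasurableSet Q) (hmem : ∀ x, x + G x ∈ Q ↔ x ∈ Q) :
    ∫ x in Q, (1 + fderiv ℝ G x).det ∂μ = μ.real Q := by
  have hbij := bijective_add_of_lipschitzWith_lt_one hG hc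
  have himage : (fun x => x + G x) '' Q = Q :=
    ((preimage_eq_iff_eq_image hbij).1 (Set.ext hmem)).symm
  have hjac : ∀ᵐ x ∂μ.restrict Q,
      (1 + fderiv ℝ G x).det = |(fderiv ℝ (fun x => x + G x) x).det| := by
    filter_upwards [ae_restrict_of_ae hG.ae_differentiableAt] with x hx
    have hpos : 0 < (1 + fderiv ℝ G x).det := det_one_add_pos_of_norm_lt_one
      ((norm_fderiv_le_of_lipschitz ℝ hG).trans_lt (by exact_mod_cast hc))
    have hderiv : HasFDerivAt (fun x => x + G x) (1 + fderiv ℝ G x) x :=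
      (hasFDerivAt_id x).add hx.hasFDerivAt
    rw [hderiv.fderiv, abs_of_pos hpos]
  have hlip : LipschitzWith (1 + c) fun x => x + G x := LipschitzWith.id.add hG
  rw [integral_congr_ae hjac,
    setIntegral_abs_det_fderiv_eq_measureReal_image μ hlip hQ hbij.1.injOn, himage]

theorem setIntegral_det_one_add_fderiv_eq_measureReal {G : E → E} (hG : LipschitzWith c G)
    {Q : Set E} (hQ : MeasurableSet Q) (hQfin : μ Q ≠ ∞)
    (hmem : ∀ t ∈ Icc (0 : ℝ) 1, ∀ x, x + t • G x ∈ Q ↔ x ∈ Q) :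
    ∫ x in Q, (1 + fderiv ℝ G x).det ∂μ = μ.real Q := by
  set t : Fin (finrank ℝ E + 1) → ℝ := fun j => ((c : ℝ) + 1 + j)⁻¹
  have ht : Function.Injective t := fun i j hij => by simpa [t, Fin.ext_iff] using hij
  have hsmall : ∀ j, ∫ x in Q, (1 + t j • fderiv ℝ G x).det ∂μ = μ.real Q := by
    intro j
    have hlip : LipschitzWith (‖t j‖₊ * c) (t j • G) := (lipschitzWith_smul (t j)).comp hG
    have hj : (0 : ℝ) ≤ (j : ℕ) := Nat.cast_nonneg _
    have ht0 : 0 < t j := by positivity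
    have ht1 : t j ≤ 1 := inv_le_one_of_one_le₀ (by linarith [c.coe_nonneg, hj])
    have htc : ‖t j‖₊ * c < 1 := by
      rw [← NNReal.coe_lt_coe]
      simp only [NNReal.coe_mul, coe_nnnorm, NNReal.coe_one, Real.norm_of_nonneg ht0.le, t]
      rw [inv_mul_lt_one₀ (by positivity)]
      linarith
    simpa only [fderiv_const_smul_field, Pi.smul_apply] using
      setIntegral_det_one_add_fderiv_eq_measureReal_of_lt_one μ hlip htc hQ
        (hmem (t j) ⟨ht0.le, ht1⟩)
  have hint : ∀ j, IntegrableOn (fun x => (1 + t j • fderiv ℝ G x).det) Q μ := fun j =>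
    integrableOn_comp_fderiv_of_lipschitzWith μ hG (h := fun A => (1 + t j • A).det)
      (ContinuousLinearMap.continuous_det.comp (by fun_prop)) hQfin
  obtain ⟨w, hw⟩ := exists_weights_det_one_add (M := E) ht
  have hw1 : ∑ j, w j = 1 := by simpa using (hw 0).symm
  calc ∫ x in Q, (1 + fderiv ℝ G x).det ∂μ
      = ∫ x in Q, ∑ j, w j * (1 + t j • fderiv ℝ G x).det ∂μ :=
        integral_congr_ae (.of_forall fun x => hw (fderiv ℝ G x))
    _ = ∑ j, w j * ∫ x in Q, (1 + t j • fderiv ℝ G x).det ∂μ := by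
        rw [integral_finsetSum _ fun j _ => (hint j).const_mul _]
        simp only [integral_const_mul]
    _ = μ.real Q := by simp only [hsmall, ← Finset.sum_mul, hw1, one_mul]

end Jacobian

theorem ae_restrict_mem_interior_of_convex {E : Type*} [NormedAddCommGroup E] [NormedSpace ℝ E]
    [FiniteDimensional ℝ E] [MeasurableSpace E] [BorelSpace E] (μ : Measure E)
    [μ.IsAddHaarMeasure] {s : Set E} (hs : Convex ℝ s) :
    ∀ᵐ x ∂μ.restrict s, x ∈ interior s := by
  rw [← Measure.restrict_congr_set (interior_ae_eq_of_null_frontier (hs.addHaar_frontier μ))]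
  exact ae_restrict_mem isOpen_interior.measurableSet

theorem exists_lipschitzOnWith_dist_lt {E F : Type*} [NormedAddCommGroup E] [NormedSpace ℝ E]
    [FiniteDimensional ℝ E] [NormedAddCommGroup F] [NormedSpace ℝ F] {K : Set E}
    (hK : IsCompact K) (hconv : Convex ℝ K) {g : E → F} (hg : Continuous g) {ε : ℝ}
    (hε : 0 < ε) : ∃ (c : ℝ≥0) (f : E → F), LipschitzOnWith c f K ∧ ∀ x, dist (f x) (g x) < ε := by
  obtain ⟨f, hf, hfg, -⟩ := hg.exists_contDiff_approx 1 continuous_const fun _ => hε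
  obtain ⟨c, hc⟩ := hf.contDiffOn.exists_lipschitzOnWith one_ne_zero hconv hK
  exact ⟨c, f, hc, hfg⟩

section PoincareMiranda

variable {ι : Type*}

/-- The coordinatewise nearest-point retraction of `ℝ^ι` onto the unit cube `[0, 1]^ι`. -/
noncomputable def unitCubeRetraction (x : ι → ℝ) : ι → ℝ := fun i => projIcc 0 1 zero_le_one (x i)

theorem unitCubeRetraction_mem (x : ι → ℝ) : unitCubeRetraction x ∈ Icc (0 : ι → ℝ) 1 :=
  ⟨fun i => (projIcc 0 1 zero_le_one (x i)).2.1, fun i => (projIcc 0 1 zero_le_one (x i)).2.2⟩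

theorem unitCubeRetraction_apply_of_nonpos {x : ι → ℝ} {i : ι} (hi : x i ≤ 0) :
    unitCubeRetraction x i = 0 := by
  rw [unitCubeRetraction, projIcc_of_le_left zero_le_one hi]

theorem unitCubeRetraction_apply_of_one_le {x : ι → ℝ} {i : ι} (hi : 1 ≤ x i) :
    unitCubeRetraction x i = 1 := by
  rw [unitCubeRetraction, projIcc_of_right_le zero_le_one hi]

theorem unitCubeRetraction_apply_of_mem {x : ι → ℝ} {i : ι} (hi : x i ∈ Icc (0 : ℝ) 1) :
    unitCubeRetraction x i = x i := by
  rw [unitCubeRetraction, projIcc_of_mem zero_le_one hi]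

theorem unitCubeRetraction_of_mem {x : ι → ℝ} (hx : x ∈ Icc (0 : ι → ℝ) 1) :
    unitCubeRetraction x = x :=
  funext fun i => unitCubeRetraction_apply_of_mem ⟨hx.1 i, hx.2 i⟩

theorem add_smul_mem_unitCube_iff {G : (ι → ℝ) → ι → ℝ}
    (hmaps : ∀ x ∈ Icc (0 : ι → ℝ) 1, x + G x ∈ Icc (0 : ι → ℝ) 1)
    (hout : ∀ x i, x i ∉ Icc (0 : ℝ) 1 → G x i = 0) {t : ℝ} (ht : t ∈ Icc (0 : ℝ) 1)
    (x : ι → ℝ) : x + t • G x ∈ Icc (0 : ι → ℝ) 1 ↔ x ∈ Icc (0 : ι → ℝ) 1 := by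
  refine ⟨fun h => ?_, fun hx => (convex_Icc 0 1).add_smul_mem hx (hmaps x hx) ht⟩
  have hcoord : ∀ i, x i ∈ Icc (0 : ℝ) 1 := by
    intro i
    by_contra hi
    have hfix : (x + t • G x) i = x i := by simp [hout x i hi]
    exact hi ⟨hfix ▸ h.1 i, hfix ▸ h.2 i⟩
  exact ⟨fun i => (hcoord i).1, fun i => (hcoord i).2⟩

theorem det_eq_zero_of_isLocalExtr_apply [Finite ι] {Φ : (ι → ℝ) → ι → ℝ} {x : ι → ℝ}
    {A : (ι → ℝ) →L[ℝ] ι → ℝ} (hΦ : HasFDerivAt Φ A x) {i : ι}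
    (hextr : IsLocalExtr (fun y => Φ y i) x) : A.det = 0 := by
  classical
  have := Fintype.ofFinite ι
  have hrow : (ContinuousLinearMap.proj i : (ι → ℝ) →L[ℝ] ℝ).comp A = 0 :=
    hextr.hasFDerivAt_eq_zero (hasFDerivAt_pi'.1 hΦ i)
  by_contra hdet
  obtain ⟨v, hv⟩ := (LinearMap.equivOfDetNeZero _ hdet).surjective (Pi.single i 1)
  have hAv : A v = Pi.single i 1 := hv
  have hAvi : A v i = 0 := DFunLike.congr_fun hrow v
  simp [hAv] at hAvi

theorem det_eq_zero_of_eventually_mem_Icc [Finite ι] {Φ : (ι → ℝ) → ι → ℝ} {x a b : ι → ℝ}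
    {A : (ι → ℝ) →L[ℝ] ι → ℝ} (hΦ : HasFDerivAt Φ A x) (hmem : ∀ᶠ y in 𝓝 x, Φ y ∈ Icc a b)
    {i : ι} (hi : Φ x i ∉ Ioo (a i) (b i)) : A.det = 0 := by
  refine det_eq_zero_of_isLocalExtr_apply hΦ (i := i) ?_
  rcases le_or_gt (Φ x i) (a i) with h | h
  · exact Or.inl (hmem.mono fun y hy => h.trans (hy.1 i))
  · exact Or.inr (hmem.mono fun y hy => (hy.2 i).trans (not_lt.1 fun hb => hi ⟨h, hb⟩))

section Lipschitz

variable [Fintype ι]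

theorem lipschitzWith_unitCubeRetraction :
    LipschitzWith 1 (unitCubeRetraction : (ι → ℝ) → ι → ℝ) := by
  refine LipschitzWith.of_dist_le_mul fun x y => (dist_pi_le_iff (by positivity)).2 fun i => ?_
  calc dist (unitCubeRetraction x i) (unitCubeRetraction y i)
      ≤ (1 : ℝ≥0) * dist (x i) (y i) := (LipschitzWith.projIcc zero_le_one).dist_le_mul _ _
    _ ≤ (1 : ℝ≥0) * dist x y := by gcongr; exact dist_le_pi_dist x y i

theorem setIntegral_unitCube_det_one_add_fderiv_eq_one {c : ℝ≥0} {G : (ι → ℝ) → ι → ℝ}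
    (hG : LipschitzWith c G)
    (hmaps : ∀ x ∈ Icc (0 : ι → ℝ) 1, x + G x ∈ Icc (0 : ι → ℝ) 1)
    (hout : ∀ x i, x i ∉ Icc (0 : ℝ) 1 → G x i = 0) :
    ∫ x in Icc (0 : ι → ℝ) 1, (1 + fderiv ℝ G x).det = 1 := by
  rw [setIntegral_det_one_add_fderiv_eq_measureReal volume hG measurableSet_Icc
    isCompact_Icc.measure_ne_top fun t ht => add_smul_mem_unitCube_iff hmaps hout ht]
  simp [Measure.real, Real.volume_Icc_pi]

theorem exists_forall_apply_mem_Ioo_of_lipschitzOnWith {c : ℝ≥0} {F : (ι → ℝ) → ι → ℝ}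
    (hF : LipschitzOnWith c F (Icc 0 1)) (hmaps : MapsTo F (Icc 0 1) (Icc 0 1))
    (hface0 : ∀ x ∈ Icc (0 : ι → ℝ) 1, ∀ i, x i = 0 → F x i = 0)
    (hface1 : ∀ x ∈ Icc (0 : ι → ℝ) 1, ∀ i, x i = 1 → F x i = 1) :
    ∃ x ∈ Icc (0 : ι → ℝ) 1, ∀ i, F x i ∈ Ioo (0 : ℝ) 1 := by
  by_contra! hbdry
  set r : (ι → ℝ) → ι → ℝ := unitCubeRetraction
  set G : (ι → ℝ) → ι → ℝ := fun x => F (r x) - r x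
  have hGF : ∀ x ∈ Icc (0 : ι → ℝ) 1, x + G x = F x := fun x hx => by
    simp [G, r, unitCubeRetraction_of_mem hx]
  have hG : LipschitzWith (c * 1 + 1) G := by
    refine LipschitzWith.sub (lipschitzOnWith_univ.1 ?_) lipschitzWith_unitCubeRetraction
    exact hF.comp lipschitzWith_unitCubeRetraction.lipschitzOnWith
      fun x _ => unitCubeRetraction_mem x
  have hout : ∀ x i, x i ∉ Icc (0 : ℝ) 1 → G x i = 0 := by
    intro x i hi
    rcases le_total (x i) 0 with h | h
    · have hr : r x i = 0 := unitCubeRetraction_apply_of_nonpos h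
      simp [G, hr, hface0 (r x) (unitCubeRetraction_mem x) i hr]
    · have hr : r x i = 1 :=
        unitCubeRetraction_apply_of_one_le (not_le.1 fun h1 => hi ⟨h, h1⟩).le
      simp [G, hr, hface1 (r x) (unitCubeRetraction_mem x) i hr]
  have hone : ∫ x in Icc (0 : ι → ℝ) 1, (1 + fderiv ℝ G x).det = 1 :=
    setIntegral_unitCube_det_one_add_fderiv_eq_one hG (fun x hx => hGF x hx ▸ hmaps hx) hout
  have hzero : ∫ x in Icc (0 : ι → ℝ) 1, (1 + fderiv ℝ G x).det = 0 := by
    refine integral_eq_zero_of_ae ?_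
    filter_upwards [ae_restrict_of_ae hG.ae_differentiableAt,
      ae_restrict_mem_interior_of_convex volume (convex_Icc 0 1)] with x hdiff hx
    have hderiv : HasFDerivAt (fun y => y + G y) (1 + fderiv ℝ G x) x :=
      (hasFDerivAt_id x).add hdiff.hasFDerivAt
    have hmem : ∀ᶠ y in 𝓝 x, y + G y ∈ Icc (0 : ι → ℝ) 1 := by
      filter_upwards [mem_interior_iff_mem_nhds.1 hx] with y hy
      exact hGF y hy ▸ hmaps hy
    obtain ⟨i, hi⟩ := hbdry x (interior_subset hx)
    refine det_eq_zero_of_eventually_mem_Icc hderiv hmem (i := i) ?_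
    rwa [hGF x (interior_subset hx)]
  exact one_ne_zero (hone.symm.trans hzero)

theorem exists_norm_lt_of_lipschitzOnWith {c : ℝ≥0} {g : (ι → ℝ) → ι → ℝ}
    (hg : LipschitzOnWith c g (Icc 0 1))
    (hface0 : ∀ x ∈ Icc (0 : ι → ℝ) 1, ∀ i, x i = 0 → g x i ≤ 0)
    (hface1 : ∀ x ∈ Icc (0 : ι → ℝ) 1, ∀ i, x i = 1 → 0 ≤ g x i) {δ : ℝ} (hδ : 0 < δ) :
    ∃ x ∈ Icc (0 : ι → ℝ) 1, ‖g x‖ < δ := by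
  set F : (ι → ℝ) → ι → ℝ := fun x => unitCubeRetraction (x + δ⁻¹ • g x)
  have hδ' : 0 ≤ δ⁻¹ := inv_nonneg.2 hδ.le
  have hF : LipschitzOnWith (1 * (1 + ‖δ⁻¹‖₊ * c)) F (Icc 0 1) :=
    lipschitzWith_unitCubeRetraction.comp_lipschitzOnWith
      (LipschitzWith.id.lipschitzOnWith.add ((lipschitzWith_smul δ⁻¹).comp_lipschitzOnWith hg))
  obtain ⟨x, hx, hFx⟩ := exists_forall_apply_mem_Ioo_of_lipschitzOnWith hF
    (fun x _ => unitCubeRetraction_mem _)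
    (fun x hx i hi => unitCubeRetraction_apply_of_nonpos (by
      simpa [hi] using mul_nonpos_of_nonneg_of_nonpos hδ' (hface0 x hx i hi)))
    (fun x hx i hi => unitCubeRetraction_apply_of_one_le (by
      simpa [hi] using mul_nonneg hδ' (hface1 x hx i hi)))
  refine ⟨x, hx, (pi_norm_lt_iff hδ).2 fun i => ?_⟩
  have hlower : 0 < x i + δ⁻¹ * g x i :=
    not_le.1 fun h => (hFx i).1.ne' (unitCubeRetraction_apply_of_nonpos h)
  have hupper : x i + δ⁻¹ * g x i < 1 :=
    not_le.1 fun h => (hFx i).2.ne (unitCubeRetraction_apply_of_one_le h)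
  have hx0 : 0 ≤ x i := hx.1 i
  have hx1 : x i ≤ 1 := hx.2 i
  have hlt : |δ⁻¹ * g x i| < 1 := abs_lt.2 ⟨by linarith, by linarith⟩
  rwa [abs_mul, abs_of_nonneg hδ', inv_mul_lt_one₀ hδ] at hlt

end Lipschitz

theorem exists_eq_zero_of_continuousOn_unitCube [Finite ι] {g : (ι → ℝ) → ι → ℝ}
    (hg : ContinuousOn g (Icc 0 1))
    (hface0 : ∀ x ∈ Icc (0 : ι → ℝ) 1, ∀ i, x i = 0 → g x i ≤ 0)
    (hface1 : ∀ x ∈ Icc (0 : ι → ℝ) 1, ∀ i, x i = 1 → 0 ≤ g x i) :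
    ∃ x ∈ Icc (0 : ι → ℝ) 1, g x = 0 := by
  have := Fintype.ofFinite ι
  by_contra! hne
  obtain ⟨δ, hδ, hδg⟩ := isCompact_Icc.exists_forall_le' hg.norm
    fun x hx => norm_pos_iff.2 (hne x hx)
  have hgr : Continuous fun x => g (unitCubeRetraction x) :=
    hg.comp_continuous lipschitzWith_unitCubeRetraction.continuous unitCubeRetraction_mem
  obtain ⟨c, f, hf, hfgr⟩ := exists_lipschitzOnWith_dist_lt isCompact_Icc
    (convex_Icc (0 : ι → ℝ) 1) hgr (ε := δ / 4) (by positivity)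
  have hfg : ∀ x ∈ Icc (0 : ι → ℝ) 1, ∀ i, |f x i - g x i| < δ / 4 := fun x hx i =>
    (dist_le_pi_dist (f x) (g x) i).trans_lt
      (by simpa only [unitCubeRetraction_of_mem hx] using hfgr x)
  -- The added term is `∓ δ / 4` on the faces, which restores the signs lost in approximating `g`.
  set h : (ι → ℝ) → ι → ℝ := fun x => f x + (δ / 2) • (x - fun _ => 1 / 2)
  have hhi : ∀ x i, h x i = f x i + δ / 2 * (x i - 1 / 2) := fun _ _ => rfl
  have hh : LipschitzOnWith (c + ‖δ / 2‖₊ * (1 + 0)) h (Icc 0 1) :=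
    hf.add ((lipschitzWith_smul (δ / 2)).comp
      (LipschitzWith.id.sub (LipschitzWith.const _))).lipschitzOnWith
  obtain ⟨x, hx, hhx⟩ := exists_norm_lt_of_lipschitzOnWith hh
    (fun x hx i hi => by
      rw [hhi, hi]
      linarith [(abs_lt.1 (hfg x hx i)).2, hface0 x hx i hi])
    (fun x hx i hi => by
      rw [hhi, hi]
      linarith [(abs_lt.1 (hfg x hx i)).1, hface1 x hx i hi])
    (show 0 < δ / 4 by positivity)
  refine (hδg x hx).not_gt ((pi_norm_lt_iff hδ).2 fun i => abs_lt.2 ?_)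
  have hhxi := abs_lt.1 (((norm_le_pi_norm (h x) i).trans_lt hhx))
  have hfgi := abs_lt.1 (hfg x hx i)
  have hx0 : 0 ≤ δ * x i := mul_nonneg hδ.le (hx.1 i)
  have hx1 : δ * x i ≤ δ * 1 := mul_le_mul_of_nonneg_left (hx.2 i) hδ.le
  rw [hhi] at hhxi
  constructor <;> linarith

theorem Icc_subset_image_of_continuousOn_unitCube [Finite ι] {g : (ι → ℝ) → ι → ℝ} {a b : ι → ℝ}
    (hg : ContinuousOn g (Icc 0 1))
    (hface0 : ∀ x ∈ Icc (0 : ι → ℝ) 1, ∀ i, x i = 0 → g x i ≤ a i)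
    (hface1 : ∀ x ∈ Icc (0 : ι → ℝ) 1, ∀ i, x i = 1 → b i ≤ g x i) :
    Icc a b ⊆ g '' Icc 0 1 := by
  intro y hy
  obtain ⟨x, hx, hxy⟩ := exists_eq_zero_of_continuousOn_unitCube (g := fun x => g x - y)
    (hg.sub continuousOn_const)
    (fun x hx i hi => sub_nonpos.2 ((hface0 x hx i hi).trans (hy.1 i)))
    (fun x hx i hi => sub_nonneg.2 ((hy.2 i).trans (hface1 x hx i hi)))
  exact ⟨x, hx, sub_eq_zero.1 hxy⟩

end PoincareMiranda

theorem exists_continuous_injective_mapsTo_unitCube {E : Type*} [NormedAddCommGroup E]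
    [NormedSpace ℝ E] [FiniteDimensional ℝ E] {a : E} {U : Set E} (hU : U ∈ 𝓝 a) :
    ∃ κ : (Fin (finrank ℝ E) → ℝ) → E,
      Continuous κ ∧ Function.Injective κ ∧ MapsTo κ (Icc 0 1) U := by
  let L : (Fin (finrank ℝ E) → ℝ) ≃L[ℝ] E := ContinuousLinearEquiv.ofFinrankEq (by simp)
  have hnear : ∀ᶠ s : ℝ in 𝓝 0, ∀ x ∈ Icc 0 1, a + s • L x ∈ U := by
    refine isCompact_Icc.eventually_forall_of_forall_eventually fun x _ => ?_
    have hcont : Continuous fun p : ℝ × (Fin (finrank ℝ E) → ℝ) => a + p.1 • L p.2 := by fun_prop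
    exact hcont.continuousAt.eventually_mem (by simpa using hU)
  obtain ⟨s, hsU, hs⟩ := ((hnear.filter_mono nhdsWithin_le_nhds).and
    (self_mem_nhdsWithin : {0}ᶜ ∈ 𝓝[≠] (0 : ℝ))).exists
  refine ⟨fun x => a + s • L x, by fun_prop, fun x y hxy => ?_, fun x hx => hsU x hx⟩
  exact L.injective (smul_right_injective E hs (add_left_cancel hxy))

section HausdorffMeasure

variable {X : Type*} [ρ : MetricSpace X]

theorem hausdorffMeasure_image_le_hausdorffOuterMeasure {Y : Type*} [EMetricSpace Y]
    [MeasurableSpace Y] [BorelSpace Y] {c : ℝ≥0} {f : X → Y} {s : Set X}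
    (hf : LipschitzOnWith c f s) {d : ℝ} (hd : 0 ≤ d) :
    μH[d] (f '' s) ≤ (c : ℝ≥0∞) ^ d * hausdorffOuterMeasure ρ d s := by
  let _ : MeasurableSpace X := borel X
  have : BorelSpace X := ⟨rfl⟩
  rw [hausdorffOuterMeasure, OuterMeasure.coe_mkMetric]
  exact hf.hausdorffMeasure_image_le hd

variable {ι : Type*} [Fintype ι] {κ : (ι → ℝ) → X}

theorem prod_ofReal_le_hausdorffOuterMeasure_image_unitCube (hκ : ContinuousOn κ (Icc 0 1))
    {d : ι → ℝ} (hd : ∀ i, ∀ x ∈ Icc (0 : ι → ℝ) 1, x i = 0 → ∀ y ∈ Icc (0 : ι → ℝ) 1, y i = 1 →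
      d i ≤ dist (κ x) (κ y)) :
    ∏ i, ENNReal.ofReal (d i) ≤ hausdorffOuterMeasure ρ (Fintype.card ι) (κ '' Icc 0 1) := by
  set lowerFace : ι → Set (ι → ℝ) := fun i => {x ∈ Icc 0 1 | x i = 0}
  set φ : X → ι → ℝ := fun z i => Metric.infDist z (κ '' lowerFace i)
  have hφ : LipschitzWith 1 φ := LipschitzWith.of_dist_le_mul fun z w =>
    (dist_pi_le_iff (by positivity)).2 fun i =>
      (Metric.lipschitz_infDist_pt (κ '' lowerFace i)).dist_le_mul z w
  have hlower : ∀ x ∈ Icc (0 : ι → ℝ) 1, ∀ i, x i = 0 → φ (κ x) i ≤ (0 : ι → ℝ) i := by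
    intro x hx i hi
    have hxi : x ∈ lowerFace i := ⟨hx, hi⟩
    exact (Metric.infDist_zero_of_mem (mem_image_of_mem κ hxi)).le
  have hupper : ∀ y ∈ Icc (0 : ι → ℝ) 1, ∀ i, y i = 1 → d i ≤ φ (κ y) i := by
    intro y hy i hi
    have hzero : 0 ∈ lowerFace i := ⟨⟨le_rfl, zero_le_one⟩, rfl⟩
    refine (Metric.le_infDist ((nonempty_of_mem hzero).image κ)).2 ?_
    rintro _ ⟨x, ⟨hx, hxi⟩, rfl⟩
    exact dist_comm (κ x) (κ y) ▸ hd i x hx hxi y hy hi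
  have hcover : Icc 0 d ⊆ φ '' (κ '' Icc 0 1) := by
    rw [image_image]
    exact Icc_subset_image_of_continuousOn_unitCube (hφ.continuous.comp_continuousOn hκ)
      hlower hupper
  calc ∏ i, ENNReal.ofReal (d i) = volume (Icc 0 d) := by simp [Real.volume_Icc_pi]
    _ ≤ volume (φ '' (κ '' Icc 0 1)) := measure_mono hcover
    _ ≤ hausdorffOuterMeasure ρ (Fintype.card ι) (κ '' Icc 0 1) := by
      simpa [hausdorffMeasure_pi_real] using
        hausdorffMeasure_image_le_hausdorffOuterMeasure
          (hφ.lipschitzOnWith (s := κ '' Icc 0 1)) (Nat.cast_nonneg (Fintype.card ι))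

theorem hausdorffOuterMeasure_image_unitCube_pos (hκ : ContinuousOn κ (Icc 0 1))
    (hinj : InjOn κ (Icc 0 1)) :
    0 < hausdorffOuterMeasure ρ (Fintype.card ι) (κ '' Icc 0 1) := by
  set face : ι → ℝ → Set (ι → ℝ) := fun i t => {x ∈ Icc 0 1 | x i = t}
  have hface : ∀ i t, IsCompact (κ '' face i t) := fun i t =>
    (isCompact_Icc.inter_right (isClosed_eq (continuous_apply i)
      continuous_const)).image_of_continuousOn (hκ.mono (sep_subset _ _))
  have hdisj : ∀ i, Disjoint (κ '' face i 0) (κ '' face i 1) := by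
    intro i
    refine disjoint_left.2 ?_
    rintro _ ⟨x, ⟨hx, hxi⟩, rfl⟩ ⟨y, ⟨hy, hyi⟩, hxy⟩
    rw [hinj hy hx hxy, hxi] at hyi
    exact zero_ne_one hyi
  choose d hd hdist using fun i =>
    Metric.exists_pos_forall_lt_edist (hface i 0) (hface i 1).isClosed (hdisj i)
  have hprod : 0 < ∏ i, ENNReal.ofReal (d i) :=
    pos_iff_ne_zero.2 (Finset.prod_ne_zero_iff.2 fun i _ => by simpa using (hd i).ne')
  refine hprod.trans_le (prod_ofReal_le_hausdorffOuterMeasure_image_unitCube hκ ?_)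
  intro i x hx hxi y hy hyi
  have h := hdist i (κ x) ⟨x, ⟨hx, hxi⟩, rfl⟩ (κ y) ⟨y, ⟨hy, hyi⟩, rfl⟩
  rw [edist_nndist, ENNReal.coe_lt_coe] at h
  exact_mod_cast h.le

theorem hausdorffMeasure_pos_of_isOpen_nonempty_general {E : Type*} [NormedAddCommGroup E]
    [NormedSpace ℝ E] [FiniteDimensional ℝ E] {U : Set E} (hU : IsOpen U) (hne : U.Nonempty)
    {f : E → X} (hf : ContinuousOn f U) (hinj : InjOn f U) :
    0 < hausdorffOuterMeasure ρ (finrank ℝ E) (f '' U) := by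
  obtain ⟨a, ha⟩ := hne
  obtain ⟨κ, hκ, hκinj, hκU⟩ := exists_continuous_injective_mapsTo_unitCube (hU.mem_nhds ha)
  have hpos := hausdorffOuterMeasure_image_unitCube_pos (hf.comp hκ.continuousOn hκU)
    (hinj.comp hκinj.injOn hκU)
  rw [Fintype.card_fin, image_comp] at hpos
  exact hpos.trans_le (measure_mono (image_mono hκU.image_subset))

end HausdorffMeasure

/-- If `ρ` is a metric on `ℝⁿ` (`n ≥ 1`) inducing the Euclidean topology and `A ⊆ ℝⁿ` is a
nonempty Euclidean-open set, then the `n`-dimensional Hausdorff measure of `A` with respect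
to `ρ` is strictly positive. -/
theorem hausdorffMeasure_pos_of_isOpen_nonempty
    (n : ℕ) (hn : 1 ≤ n) (ρ : MetricSpace (EuclideanSpace ℝ (Fin n)))
    (hρ : ρ.toUniformSpace.toTopologicalSpace =
      (inferInstance : TopologicalSpace (EuclideanSpace ℝ (Fin n))))
    (A : Set (EuclideanSpace ℝ (Fin n))) (hA : IsOpen A) (hA' : A.Nonempty) :
    0 < hausdorffOuterMeasure ρ n A := by
  have hid : @ContinuousOn _ _ _ ρ.toUniformSpace.toTopologicalSpace id A :=
    hρ ▸ continuousOn_id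
  simpa using hausdorffMeasure_pos_of_isOpen_nonempty_general (ρ := ρ) hA hA' hid (injOn_id A)
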